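/- 𝐹̃ is a unital subalgebra of the fusion algebra ℱ: it contains the class of the empty word and is closed under the product of ℱ. -/

import Mathlib

inductive Brk : Type
  | lt  -- ⟨
  | gt  -- ⟩
deriving DecidableEq

/-- finite sequences of pairs of positive integers -/
abbrev PSeq := List (ℕ+ × ℕ+)

/-- the alphabet 𝒜: red letters `a_{•γ}` and blue letters `a_{γ◇}` -/
inductive FLetter : Type
  | red (b : Brk) (γ : PSeq)
  | blue (γ : PSeq) (d : Brk)
deriving DecidableEq

/-- the free associative algebra ℂ⟨𝒜⟩ -/
abbrev FreeA := FreeAlgebra ℂ FLetter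

noncomputable def ιA (e : FLetter) : FreeA := FreeAlgebra.ι ℂ e

noncomputable def wordProd (l : List FLetter) : FreeA := (l.map ιA).prod

/-- the letters of `𝒜_{⟨ ⟩}` -/
def IsCentral : FLetter → Prop
  | .red .lt _ => True
  | .blue _ .gt => True
  | _ => False

/-- the generating relations of the ideal 𝒥_F -/
inductive FRel : FreeA → FreeA → Prop
  | central (e f : FLetter) (he : IsCentral e) :
      FRel (ιA e * ιA f) (ιA f * ιA e)
  | red_comm (b b' : Brk) (γ γ' : PSeq) :
      FRel (ιA (.red b γ) * ιA (.red b' γ')) (ιA (.red b' γ') * ιA (.red b γ))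
  | blue_comm (d d' : Brk) (γ γ' : PSeq) :
      FRel (ιA (.blue γ d) * ιA (.blue γ' d')) (ιA (.blue γ' d') * ιA (.blue γ d))
  | fusion (b d : Brk) (α β : PSeq) (v x : List FLetter) :
      FRel (ιA (.red b α) * wordProd v * ιA (.blue α .lt) * ιA (.red .gt β) *
              wordProd x * ιA (.blue β d))
           (ιA (.red b α) * wordProd v * ιA (.red .gt β) * ιA (.blue α .lt) *
              wordProd x * ιA (.blue β d)
             + ιA (.red b (α ++ β)) * wordProd v * wordProd x * ιA (.blue (α ++ β) d))

/-- the fusion algebra ℱ = ℂ⟨𝒜⟩/𝒥_F -/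
abbrev FA := RingQuot FRel

noncomputable def mkF : FreeA →ₐ[ℂ] FA := RingQuot.mkAlgHom ℂ FRel

/-- the red letter `a_{•γ}` in ℱ -/
noncomputable def Rl (b : Brk) (γ : PSeq) : FA := mkF (ιA (.red b γ))

/-- the blue letter `a_{γ◇}` in ℱ -/
noncomputable def Bll (γ : PSeq) (d : Brk) : FA := mkF (ιA (.blue γ d))

/-- the subspace 𝐹̃ of ℱ spanned by the classes of the words
`a_{•₁α₁}⋯a_{•ₖαₖ}·a_{α₁◇₁}⋯a_{αₖ◇ₖ}` -/
noncomputable def Ftilde : Submodule ℂ FA :=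
  Submodule.span ℂ
    {x : FA | ∃ (k : ℕ) (bs ds : Fin k → Brk) (seqs : Fin k → PSeq),
      x = ((List.finRange k).map fun i => Rl (bs i) (seqs i)).prod *
            ((List.finRange k).map fun i => Bll (seqs i) (ds i)).prod}


namespace FProof

/-- red part of a list of triples -/
noncomputable def R (L : List (Brk × PSeq × Brk)) : FA := (L.map fun t => Rl t.1 t.2.1).prod
/-- blue part of a list of triples -/
noncomputable def B (L : List (Brk × PSeq × Brk)) : FA := (L.map fun t => Bll t.2.1 t.2.2).prod

lemma rel {x y : FreeA} (h : FRel x y) : mkF x = mkF y := RingQuot.mkAlgHom_rel ℂ h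

lemma rr (b b' γ γ') : Rl b γ * Rl b' γ' = Rl b' γ' * Rl b γ := by
  simpa [Rl] using rel (FRel.red_comm b b' γ γ')

lemma bb (d d' γ γ') : Bll γ d * Bll γ' d' = Bll γ' d' * Bll γ d := by
  simpa [Bll] using rel (FRel.blue_comm d d' γ γ')

lemma br_lt (β α d) : Bll α d * Rl .lt β = Rl .lt β * Bll α d := by
  simpa [Bll, Rl] using (rel (FRel.central (.red .lt β) (.blue α d) trivial)).symm

lemma br_gt (b β α) : Bll α .gt * Rl b β = Rl b β * Bll α .gt := by
  simpa [Bll, Rl] using (rel (FRel.central (.blue α .gt) (.red b β) trivial))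

/-- classes of words -/
def IsW (y : FA) : Prop := ∃ l, y = mkF (wordProd l)

lemma IsW.one : IsW 1 := ⟨[], by simp [wordProd]⟩
lemma IsW.mul {x y} (hx : IsW x) (hy : IsW y) : IsW (x * y) := by
  obtain ⟨l, rfl⟩ := hx
  obtain ⟨m, rfl⟩ := hy
  exact ⟨l ++ m, by simp [wordProd]⟩
lemma IsW.red (b γ) : IsW (Rl b γ) := ⟨[.red b γ], by simp [wordProd, Rl]⟩
lemma IsW.blue (γ d) : IsW (Bll γ d) := ⟨[.blue γ d], by simp [wordProd, Bll]⟩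

lemma R_cons (t L) : R (t :: L) = Rl t.1 t.2.1 * R L := by simp [R]
lemma B_cons (t L) : B (t :: L) = Bll t.2.1 t.2.2 * B L := by simp [B]
lemma R_app (L M) : R (L ++ M) = R L * R M := by simp [R]
lemma B_app (L M) : B (L ++ M) = B L * B M := by simp [B]

lemma R_W (L) : IsW (R L) := by
  induction L with
  | nil => simpa [R] using IsW.one
  | cons t L ih => rw [R_cons]; exact (IsW.red _ _).mul ih
lemma B_W (L) : IsW (B L) := by
  induction L with
  | nil => simpa [B] using IsW.one
  | cons t L ih => rw [B_cons]; exact (IsW.blue _ _).mul ih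

lemma R_comm (b γ L) : R L * Rl b γ = Rl b γ * R L := by
  induction L with
  | nil => simp [R]
  | cons t L ih => rw [R_cons, mul_assoc, ih, ← mul_assoc, rr, mul_assoc]
lemma B_comm (γ d L) : B L * Bll γ d = Bll γ d * B L := by
  induction L with
  | nil => simp [B]
  | cons t L ih => rw [B_cons, mul_assoc, ih, ← mul_assoc, bb, mul_assoc]
lemma BR_lt (γ L) : B L * Rl .lt γ = Rl .lt γ * B L := by
  induction L with
  | nil => simp [B]
  | cons t L ih => rw [B_cons, mul_assoc, ih, ← mul_assoc, br_lt, mul_assoc]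

lemma fus (b d α β) {v x : FA} (hv : IsW v) (hx : IsW x) :
    Rl b α * v * Bll α .lt * Rl .gt β * x * Bll β d =
      Rl b α * v * Rl .gt β * Bll α .lt * x * Bll β d
        + Rl b (α ++ β) * v * x * Bll (α ++ β) d := by
  obtain ⟨l, rfl⟩ := hv
  obtain ⟨m, rfl⟩ := hx
  simpa only [map_mul, map_add, Rl, Bll] using rel (FRel.fusion b d α β l m)

lemma mem_G (L) : R L * B L ∈ Ftilde := by
  refine Submodule.subset_span ⟨L.length, fun i => (L.get i).1, fun i => (L.get i).2.2,
    fun i => (L.get i).2.1, ?_⟩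
  have h : (List.finRange L.length).map L.get = L := by simp
  conv_lhs => rw [← h]
  simp only [R, B, List.map_map]
  rfl

lemma Ft_eq : Ftilde = Submodule.span ℂ (Set.range fun L => R L * B L) := by
  apply le_antisymm
  · refine Submodule.span_le.2 ?_
    rintro x ⟨k, bs, ds, s, rfl⟩
    refine Submodule.subset_span ⟨(List.finRange k).map fun i => (bs i, s i, ds i), ?_⟩
    simp only [R, B, List.map_map]
    rfl
  · refine Submodule.span_le.2 ?_
    rintro x ⟨L, rfl⟩
    exact mem_G L

lemma wrap (b β d) {x : FA} (hx : x ∈ Ftilde) : Rl b β * x * Bll β d ∈ Ftilde := by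
  rw [Ft_eq] at hx
  induction hx using Submodule.span_induction with
  | mem x h =>
    obtain ⟨L, rfl⟩ := h
    have := mem_G ((b, β, d) :: L)
    rw [R_cons, B_cons, ← B_comm] at this
    simpa only [mul_assoc] using this
  | zero => simp
  | add x y _ _ hx hy => rw [mul_add, add_mul]; exact add_mem hx hy
  | smul c x _ hx =>
    rw [mul_smul_comm, smul_mul_assoc]; exact Submodule.smul_mem _ _ hx

lemma inner (β d) (y : FA) (hy : IsW y) (h : ∀ L, R L * B L * y ∈ Ftilde) (L1) :
    ∀ L2, R (L1 ++ L2) * B L1 * Rl .gt β * B L2 * y * Bll β d ∈ Ftilde := by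
  induction L1 with
  | nil =>
    intro L2
    have := wrap .gt β d (h L2)
    simp only [← mul_assoc] at this
    rw [← R_comm] at this
    simpa [B] using this
  | cons t L1 ih =>
    intro L2
    obtain ⟨b, α, e⟩ := t
    have h1 := ih ((b, α, e) :: L2)
    have e1 : R (L1 ++ (b, α, e) :: L2) = Rl b α * R (L1 ++ L2) := by
      rw [R_app, R_cons, ← mul_assoc, R_comm, mul_assoc, R_app]
    rw [e1, B_cons] at h1
    rw [List.cons_append, R_cons, B_cons, ← B_comm]
    simp only [← mul_assoc] at h1 ⊢
    cases e with
    | gt =>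
      rw [mul_assoc _ (Bll α .gt) (Rl .gt β), br_gt]
      simpa only [← mul_assoc] using h1
    | lt =>
      have h2 := wrap b (α ++ β) d (h (L1 ++ L2))
      have f := fus b d α β ((R_W (L1 ++ L2)).mul (B_W L1)) ((B_W L2).mul hy)
      rw [B_app] at h2
      simp only [← mul_assoc] at f h2
      rw [f]
      exact add_mem h1 h2

lemma mulG (M) : ∀ L, R L * B L * (R M * B M) ∈ Ftilde := by
  induction M with
  | nil => intro L; simpa [R, B] using mem_G L
  | cons t M ih =>
    intro L
    obtain ⟨b, β, d⟩ := t
    rw [R_cons, B_cons, ← B_comm]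
    cases b with
    | lt =>
      have := wrap .lt β d (ih L)
      simp only [← mul_assoc] at this ⊢
      rw [mul_assoc _ (B L), BR_lt, ← mul_assoc, R_comm]
      exact this
    | gt =>
      have := inner β d _ ((R_W M).mul (B_W M)) ih L []
      simpa [B, ← mul_assoc] using this

end FProof

/-- 𝐹̃ is a unital subalgebra of the fusion algebra ℱ. -/
theorem Ftilde_subalgebra :
    (1 : FA) ∈ Ftilde ∧ ∀ x ∈ Ftilde, ∀ y ∈ Ftilde, x * y ∈ Ftilde := by
  constructor
  · simpa [FProof.R, FProof.B] using FProof.mem_G []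
  · intro x hx y hy
    have h := Submodule.mul_mem_mul hx hy
    have key : Ftilde * Ftilde ≤ Ftilde := by
      conv_lhs => rw [FProof.Ft_eq, Submodule.span_mul_span]
      refine Submodule.span_le.2 ?_
      rintro _ ⟨_, ⟨L, rfl⟩, _, ⟨M, rfl⟩, rfl⟩
      exact FProof.mulG M L
    exact key h
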